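/- arXiv:1002.2725 — 4 statements merged into one kernel-verified Lean document; each statement's English description precedes it below -/
import Mathlib

section
/- For every σ ∈ ℓ²(ℤ,ℂ) and every m ∈ ℤ with |m| ≥ 2, writing ∏_{j∈ℤ, j≠m}(1 + σ_j/(j − m)) = 1 + r_m(σ), one has |r_m(σ)| ≤ 2·(‖σ‖/(|m| − 1)^{1/2} + ‖T_m(σ)‖)·exp(2‖σ‖), where ‖T_m(σ)‖ := (∑_{j∈ℤ, |j| ≥ |m|/2} |σ_j|²)^{1/2} is the ℓ²-norm of the tail (σ_j)_{|j| ≥ |m|/2}, i.e. the sum is over all j ∈ ℤ with 2|j| ≥ |m|. -/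
/-!
Since `‖∏ (1 + a j) - 1‖ ≤ S * exp S` with `S = ∑ ‖a j‖`, it suffices to estimate
`S = ∑ |j - m|⁻¹ * ‖σ j‖` twice by the Cauchy–Schwarz inequality. Globally,
`∑ (j - m)⁻² = π² / 3 ≤ 4` gives `S ≤ 2 * ‖σ‖`, which controls the exponential. For the linear
factor, split at `2 * |j| = |m|`: the far part is at most `2 * ‖T_m σ‖` for the same reason, while
the near part has at most `|m|` indices, all of them with `|j - m| ≥ |m| / 2`, so its weights have
square sum at most `4 / |m|`.
-/

theorem exp_sub_one_le_mul_exp (x : ℝ) : Real.exp x - 1 ≤ x * Real.exp x := by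
  have h : (1 - x) * Real.exp x ≤ Real.exp (-x) * Real.exp x := by
    gcongr
    exact Real.one_sub_le_exp_neg x
  rw [← Real.exp_add, neg_add_cancel, Real.exp_zero] at h
  linarith

theorem norm_tprod_one_add_sub_one_le {ι R : Type*} [NormedCommRing R] [NormOneClass R]
    [CompleteSpace R] {f : ι → R} (hf : Summable fun i => ‖f i‖) :
    ‖(∏' i, (1 + f i)) - 1‖ ≤ (∑' i, ‖f i‖) * Real.exp (∑' i, ‖f i‖) := by
  have hprod := (multipliable_one_add_of_summable hf).hasProd
  refine le_of_tendsto (hprod.sub_const 1).norm (Filter.Eventually.of_forall fun t => ?_)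
  calc ‖∏ i ∈ t, (1 + f i) - 1‖
      ≤ Real.exp (∑ i ∈ t, ‖f i‖) - 1 := t.norm_prod_one_add_sub_one_le f
    _ ≤ Real.exp (∑' i, ‖f i‖) - 1 := by
      gcongr
      exact hf.sum_le_tsum t fun i _ => norm_nonneg (f i)
    _ ≤ (∑' i, ‖f i‖) * Real.exp (∑' i, ‖f i‖) := exp_sub_one_le_mul_exp _

section CauchySchwarz

variable {ι : Type*} {f g : ι → ℝ}

theorem summable_mul_of_summable_sq (hf : Summable fun i => f i ^ 2)
    (hg : Summable fun i => g i ^ 2) : Summable fun i => f i * g i := by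
  refine (hf.add hg).of_norm_bounded fun i => ?_
  rw [Real.norm_eq_abs, abs_le]
  constructor <;> nlinarith [sq_nonneg (f i + g i), sq_nonneg (f i - g i)]

theorem tsum_mul_le_sqrt_mul_sqrt (hf : Summable fun i => f i ^ 2)
    (hg : Summable fun i => g i ^ 2) :
    ∑' i, f i * g i ≤ √(∑' i, f i ^ 2) * √(∑' i, g i ^ 2) := by
  refine (summable_mul_of_summable_sq hf hg).tsum_le_of_sum_le fun t => ?_
  calc ∑ i ∈ t, f i * g i
      ≤ √(∑ i ∈ t, f i ^ 2) * √(∑ i ∈ t, g i ^ 2) := Real.sum_mul_le_sqrt_mul_sqrt t f g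
    _ ≤ √(∑' i, f i ^ 2) * √(∑' i, g i ^ 2) := by
      gcongr
      · exact hf.sum_le_tsum t fun i _ => sq_nonneg (f i)
      · exact hg.sum_le_tsum t fun i _ => sq_nonneg (g i)

end CauchySchwarz

section Weights

-- The term at `k = 0` vanishes because `0⁻¹ = 0`.
theorem hasSum_int_inv_sq : HasSum (fun k : ℤ => ((k : ℝ)⁻¹) ^ 2) (Real.pi ^ 2 / 3) := by
  have hpos : HasSum (fun n : ℕ => (((n : ℝ) + 1)⁻¹) ^ 2) (Real.pi ^ 2 / 6) := by
    simpa using (hasSum_nat_add_iff' (f := fun n : ℕ => (1 : ℝ) / (n : ℝ) ^ 2) 1).2 hasSum_zeta_two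
  have hneg : HasSum (fun n : ℕ => ((-1 + -(n : ℝ))⁻¹) ^ 2) (Real.pi ^ 2 / 6) := by
    convert hpos using 2 with n
    rw [← neg_add, inv_neg, neg_sq, add_comm]
  convert HasSum.of_add_one_of_neg_add_one (f := fun k : ℤ => ((k : ℝ)⁻¹) ^ 2)
    (by simpa using hpos) (by simpa using hneg) using 1
  simp only [Int.cast_zero, inv_zero]
  ring

theorem hasSum_int_inv_sub_sq (m : ℤ) :
    HasSum (fun j : ℤ => (((j : ℝ) - m)⁻¹) ^ 2) (Real.pi ^ 2 / 3) := by
  simpa [Function.comp_def] using (Equiv.subRight m).hasSum_iff.2 hasSum_int_inv_sq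

theorem tsum_int_inv_sub_sq_le_four (m : ℤ) : ∑' j : ℤ, (((j : ℝ) - m)⁻¹) ^ 2 ≤ 4 := by
  rw [(hasSum_int_inv_sub_sq m).tsum_eq]
  nlinarith [Real.pi_lt_d2, Real.pi_pos]

theorem card_le_abs_of_forall_two_mul_abs_lt {m : ℤ} {u : Finset ℤ}
    (hu : ∀ j ∈ u, 2 * |j| < |m|) : (u.card : ℤ) ≤ |m| := by
  have hsub : u ⊆ Finset.Icc (-((|m| - 1) / 2)) ((|m| - 1) / 2) := by
    intro j hj
    have := hu j hj
    rw [Finset.mem_Icc, ← abs_le]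
    omega
  have hcard := Finset.card_le_card hsub
  rw [Int.card_Icc] at hcard
  have := abs_nonneg m
  omega

theorem inv_sub_sq_le_of_two_mul_abs_lt {j m : ℤ} (hj : 2 * |j| < |m|) :
    (((j : ℝ) - m)⁻¹) ^ 2 ≤ 4 / (m : ℝ) ^ 2 := by
  have hdist : |m| ≤ 2 * |j - m| := by
    have := abs_sub_abs_le_abs_sub m j
    rw [abs_sub_comm] at this
    omega
  have hm : 0 < |(m : ℝ)| := by
    exact_mod_cast (mul_nonneg zero_le_two (abs_nonneg j)).trans_lt hj
  have hhalf : |(m : ℝ)| / 2 ≤ |(j : ℝ) - m| := by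
    rw [div_le_iff₀' two_pos]
    exact_mod_cast hdist
  calc (((j : ℝ) - m)⁻¹) ^ 2 = (|(j : ℝ) - m|⁻¹) ^ 2 := by rw [inv_pow, inv_pow, sq_abs]
    _ ≤ ((|(m : ℝ)| / 2)⁻¹) ^ 2 := by gcongr
    _ = 4 / (m : ℝ) ^ 2 := by rw [inv_div, div_pow, sq_abs]; norm_num

theorem tsum_near_inv_sub_sq_le {m : ℤ} (hm : m ≠ 0) :
    ∑' j : ↥{j : ℤ | |m| ≤ 2 * |j|}ᶜ, (((j : ℝ) - m)⁻¹) ^ 2 ≤ 4 / |(m : ℝ)| := by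
  refine Real.tsum_le_of_sum_le (fun j => sq_nonneg _) fun t => ?_
  have hnear (j : ↥{j : ℤ | |m| ≤ 2 * |j|}ᶜ) : 2 * |(j : ℤ)| < |m| := not_le.1 j.2
  have hcard : (t.card : ℝ) ≤ |(m : ℝ)| := by
    have h := card_le_abs_of_forall_two_mul_abs_lt (m := m)
      (u := t.map (Function.Embedding.subtype _)) (by simp +contextual)
    rw [Finset.card_map] at h
    exact_mod_cast h
  have hm' : |(m : ℝ)| ≠ 0 := abs_ne_zero.2 (Int.cast_ne_zero.2 hm)
  calc ∑ j ∈ t, (((j : ℝ) - m)⁻¹) ^ 2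
      ≤ t.card • (4 / (m : ℝ) ^ 2) :=
        Finset.sum_le_card_nsmul t _ _ fun j _ => inv_sub_sq_le_of_two_mul_abs_lt (hnear j)
    _ ≤ |(m : ℝ)| * (4 / (m : ℝ) ^ 2) := by
      rw [nsmul_eq_mul]
      gcongr
    _ = 4 / |(m : ℝ)| := by
      rw [← sq_abs, sq, ← mul_div_assoc, mul_div_mul_left _ _ hm']

end Weights

section WeightedSums

variable {f : ℤ → ℝ}

theorem summable_abs_inv_sub_mul (hf : Summable fun j => f j ^ 2) (m : ℤ) :
    Summable fun j : ℤ => |((j : ℝ) - m)⁻¹| * f j :=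
  summable_mul_of_summable_sq (by simpa only [sq_abs] using (hasSum_int_inv_sub_sq m).summable) hf

theorem tsum_subtype_abs_inv_sub_mul_le (hf : Summable fun j => f j ^ 2) {m : ℤ} {s : Set ℤ}
    {C : ℝ} (hC : 0 ≤ C) (hs : ∑' j : s, (((j : ℝ) - m)⁻¹) ^ 2 ≤ C ^ 2) :
    ∑' j : s, |((j : ℝ) - m)⁻¹| * f j ≤ C * √(∑' j : s, f j ^ 2) := by
  have hw : Summable fun j : s => |((j : ℝ) - m)⁻¹| ^ 2 := by
    simp only [sq_abs]
    exact (hasSum_int_inv_sub_sq m).summable.subtype s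
  calc ∑' j : s, |((j : ℝ) - m)⁻¹| * f j
      ≤ √(∑' j : s, |((j : ℝ) - m)⁻¹| ^ 2) * √(∑' j : s, f j ^ 2) :=
        tsum_mul_le_sqrt_mul_sqrt hw (hf.subtype s)
    _ ≤ C * √(∑' j : s, f j ^ 2) := by
      simp only [sq_abs]
      gcongr
      exact Real.sqrt_le_iff.2 ⟨hC, hs⟩

theorem tsum_subtype_abs_inv_sub_mul_le_two_mul_sqrt (hf : Summable fun j => f j ^ 2) (m : ℤ)
    (s : Set ℤ) :
    ∑' j : s, |((j : ℝ) - m)⁻¹| * f j ≤ 2 * √(∑' j : s, f j ^ 2) := by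
  refine tsum_subtype_abs_inv_sub_mul_le hf zero_le_two ?_
  calc ∑' j : s, (((j : ℝ) - m)⁻¹) ^ 2
      ≤ ∑' j : ℤ, (((j : ℝ) - m)⁻¹) ^ 2 :=
        (hasSum_int_inv_sub_sq m).summable.tsum_subtype_le (fun j : ℤ => (((j : ℝ) - m)⁻¹) ^ 2) s
          fun _ => sq_nonneg _
    _ ≤ 2 ^ 2 := (tsum_int_inv_sub_sq_le_four m).trans_eq (by norm_num)

theorem tsum_abs_inv_sub_mul_le_two_mul_sqrt (hf : Summable fun j => f j ^ 2) (m : ℤ) :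
    ∑' j : ℤ, |((j : ℝ) - m)⁻¹| * f j ≤ 2 * √(∑' j, f j ^ 2) := by
  have h := tsum_subtype_abs_inv_sub_mul_le_two_mul_sqrt hf m Set.univ
  rwa [tsum_univ fun j : ℤ => |((j : ℝ) - m)⁻¹| * f j, tsum_univ fun j => f j ^ 2] at h

theorem tsum_near_abs_inv_sub_mul_le (hf : Summable fun j => f j ^ 2) {m : ℤ} (hm : m ≠ 0) :
    ∑' j : ↥{j : ℤ | |m| ≤ 2 * |j|}ᶜ, |((j : ℝ) - m)⁻¹| * f j ≤
      2 * (√(∑' j, f j ^ 2) / √|(m : ℝ)|) := by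
  have hw : 4 / |(m : ℝ)| = (2 / √|(m : ℝ)|) ^ 2 := by
    rw [div_pow, Real.sq_sqrt (abs_nonneg _)]
    norm_num
  calc _ ≤ 2 / √|(m : ℝ)| * √(∑' j : ↥{j : ℤ | |m| ≤ 2 * |j|}ᶜ, f j ^ 2) :=
        tsum_subtype_abs_inv_sub_mul_le hf (by positivity)
          ((tsum_near_inv_sub_sq_le hm).trans_eq hw)
    _ ≤ 2 / √|(m : ℝ)| * √(∑' j, f j ^ 2) := by
      gcongr
      exact hf.tsum_subtype_le (fun j => f j ^ 2) _ fun _ => sq_nonneg _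
    _ = 2 * (√(∑' j, f j ^ 2) / √|(m : ℝ)|) := by ring

theorem tsum_abs_inv_sub_mul_le_near_add_far (hf : Summable fun j => f j ^ 2) {m : ℤ}
    (hm : m ≠ 0) :
    ∑' j : ℤ, |((j : ℝ) - m)⁻¹| * f j ≤
      2 * (√(∑' j, f j ^ 2) / √|(m : ℝ)| + √(∑' j : {j : ℤ // |m| ≤ 2 * |j|}, f j ^ 2)) := by
  rw [← (summable_abs_inv_sub_mul hf m).tsum_subtype_add_tsum_subtype_compl
    {j : ℤ | |m| ≤ 2 * |j|}, add_comm, mul_add]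
  exact add_le_add (tsum_near_abs_inv_sub_mul_le hf hm)
    (tsum_subtype_abs_inv_sub_mul_le_two_mul_sqrt hf m _)

end WeightedSums

theorem stmt_4_general {A : Type*} [NormedCommRing A] [NormOneClass A] [NormedAlgebra ℝ A]
    [CompleteSpace A] (σ : ℤ → A) (hσ : Summable fun j => ‖σ j‖ ^ 2) (m : ℤ) (hm : m ≠ 0) :
    ‖(∏' j : {j : ℤ // j ≠ m}, (1 + ((j : ℝ) - m)⁻¹ • σ j)) - 1‖ ≤
      2 * (√(∑' j, ‖σ j‖ ^ 2) / √|(m : ℝ)| + √(∑' j : {j : ℤ // |m| ≤ 2 * |j|}, ‖σ j‖ ^ 2))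
        * Real.exp (2 * √(∑' j, ‖σ j‖ ^ 2)) := by
  have hnorm (j : ℤ) : ‖((j : ℝ) - m)⁻¹ • σ j‖ = |((j : ℝ) - m)⁻¹| * ‖σ j‖ := norm_smul _ _
  have hsum : Summable fun j : ℤ => ‖((j : ℝ) - m)⁻¹ • σ j‖ := by
    simpa only [hnorm] using summable_abs_inv_sub_mul hσ m
  have hle : ∑' j : {j : ℤ // j ≠ m}, ‖((j : ℝ) - m)⁻¹ • σ j‖ ≤
      ∑' j : ℤ, |((j : ℝ) - m)⁻¹| * ‖σ j‖ := by
    simp only [← hnorm]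
    exact hsum.tsum_subtype_le _ {j : ℤ | j ≠ m} fun j => norm_nonneg _
  refine (norm_tprod_one_add_sub_one_le (hsum.subtype {j : ℤ | j ≠ m})).trans ?_
  gcongr
  · exact hle.trans (tsum_abs_inv_sub_mul_le_near_add_far hσ hm)
  · exact hle.trans (tsum_abs_inv_sub_mul_le_two_mul_sqrt hσ m)

/-- For every `σ ∈ ℓ²(ℤ,ℂ)` and every `m ∈ ℤ` with `|m| ≥ 2`, writing
`∏_{j ≠ m} (1 + σ j / (j - m)) = 1 + r_m(σ)`, one has
`|r_m(σ)| ≤ 2 (‖σ‖/(|m|-1)^{1/2} + ‖T_m σ‖) exp (2‖σ‖)`, where `‖T_m σ‖` is the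
ℓ²-norm of the tail `(σ j)_{2|j| ≥ |m|}`. -/
theorem stmt_4 (σ : ℤ → ℂ) (hσ : Summable fun j => ‖σ j‖ ^ 2) (m : ℤ) (hm : 2 ≤ |m|) :
    ‖(∏' j : {j : ℤ // j ≠ m}, (1 + σ (j : ℤ) / (((j : ℤ) - m : ℤ) : ℂ))) - 1‖ ≤
      2 * (Real.sqrt (∑' j, ‖σ j‖ ^ 2) / Real.sqrt ((|m| : ℝ) - 1)
          + Real.sqrt (∑' j : {j : ℤ // |m| ≤ 2 * |(j : ℤ)|}, ‖σ (j : ℤ)‖ ^ 2))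
        * Real.exp (2 * Real.sqrt (∑' j, ‖σ j‖ ^ 2)) := by
  have hm' : (2 : ℝ) ≤ |(m : ℝ)| := by exact_mod_cast hm
  have h := stmt_4_general σ hσ m (by rintro rfl; simp at hm)
  simp only [Complex.real_smul, Complex.ofReal_inv, Complex.ofReal_sub, Complex.ofReal_intCast,
    inv_mul_eq_div] at h
  simp only [Int.cast_sub]
  refine h.trans ?_
  gcongr
  · exact Real.sqrt_pos.2 (by linarith)
  · exact sub_le_self _ zero_le_one
end

section
/- For every σ ∈ ℓ²(ℤ,ℂ) and every m ∈ ℤ with |m| ≥ 2, the series ∑_{j∈ℤ, j≠m} |σ_j|/|j − m| converges and is bounded by 2·(‖σ‖/(|m| − 1)^{1/2} + (∑_{j∈ℤ, 2|j| ≥ |m|} |σ_j|²)^{1/2}). -/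
/-! Split the sum at `|j| = |m|/2` and apply the Cauchy–Schwarz inequality to each part. Where
`2|j| ≥ |m|`, the weights `1/|j - m|` have square sum at most `2 ζ(2) = π²/3 ≤ 4`. Where
`2|j| < |m|`, there are at most `|m|` indices, and each has `|j - m| ≥ |m|/2`, so the square sum
of the weights is at most `|m| · 4/|m|² = 4/|m|`. -/

section CauchySchwarz

variable {ι : Type*} {f g : ι → ℝ}

theorem tsum_mul_le_sqrt_mul_sqrt_add_compl (hf : Summable fun i => f i ^ 2)
    (hg : Summable fun i => g i ^ 2) (s : Set ι) :
    ∑' i, f i * g i ≤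
      √(∑' i : s, f i ^ 2) * √(∑' i : s, g i ^ 2) +
        √(∑' i : ↑sᶜ, f i ^ 2) * √(∑' i : ↑sᶜ, g i ^ 2) := by
  rw [← (summable_mul_of_summable_sq hf hg).tsum_subtype_add_tsum_subtype_compl s]
  exact add_le_add (tsum_mul_le_sqrt_mul_sqrt (hf.subtype s) (hg.subtype s))
    (tsum_mul_le_sqrt_mul_sqrt (hf.subtype sᶜ) (hg.subtype sᶜ))

end CauchySchwarz

section InverseDistance

-- The term at `j = m` is `(|0|⁻¹) ^ 2 = 0`.
theorem hasSum_inv_abs_sub_sq (m : ℤ) :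
    HasSum (fun j : ℤ => (|(j : ℝ) - m|⁻¹) ^ 2) (Real.pi ^ 2 / 3) := by
  have hasSum_centered : HasSum (fun j : ℤ => (|(j : ℝ)|⁻¹) ^ 2) (Real.pi ^ 2 / 3) := by
    have hasSum_nat : HasSum (fun n : ℕ => (|(n : ℝ)|⁻¹) ^ 2) (Real.pi ^ 2 / 6) := by
      simpa using hasSum_zeta_two
    have sum_eq : Real.pi ^ 2 / 6 + Real.pi ^ 2 / 6 - (|((0 : ℤ) : ℝ)|⁻¹) ^ 2 =
        Real.pi ^ 2 / 3 := by
      simp only [Int.cast_zero, abs_zero, inv_zero]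
      ring
    exact sum_eq ▸ HasSum.of_nat_of_neg (f := fun j : ℤ => (|(j : ℝ)|⁻¹) ^ 2)
      (by simpa using hasSum_nat) (by simpa using hasSum_nat)
  simpa [Function.comp_def] using (Equiv.subRight m).hasSum_iff.mpr hasSum_centered

theorem tsum_subtype_inv_abs_sub_sq_le_four (m : ℤ) (s : Set ℤ) :
    ∑' j : s, (|((j : ℤ) : ℝ) - m|⁻¹) ^ 2 ≤ 4 := by
  calc ∑' j : s, (|((j : ℤ) : ℝ) - m|⁻¹) ^ 2
      ≤ ∑' j : ℤ, (|(j : ℝ) - m|⁻¹) ^ 2 :=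
        (hasSum_inv_abs_sub_sq m).summable.tsum_subtype_le _ s fun _ => sq_nonneg _
    _ = Real.pi ^ 2 / 3 := (hasSum_inv_abs_sub_sq m).tsum_eq
    _ ≤ 4 := by nlinarith [Real.pi_pos, Real.pi_lt_d2]

theorem coe_Icc_eq_setOf_two_mul_abs_lt (n : ℤ) :
    (Finset.Icc (-((n - 1) / 2)) ((n - 1) / 2) : Set ℤ) = {j | 2 * |j| < n} := by
  ext j
  rw [Finset.coe_Icc, Set.mem_Icc, ← abs_le, Set.mem_ofPred_eq]
  omega

theorem inv_abs_sub_le_two_div_abs {j m : ℤ} (h : 2 * |j| < |m|) :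
    |(j : ℝ) - m|⁻¹ ≤ 2 / |(m : ℝ)| := by
  have abs_m_pos : 0 < |(m : ℝ)| := by
    exact_mod_cast (show (0 : ℤ) < |m| by have := abs_nonneg j; omega)
  have half_abs_le : |(m : ℝ)| / 2 ≤ |(j : ℝ) - m| := by
    have h' : 2 * |(j : ℝ)| < |(m : ℝ)| := by exact_mod_cast h
    have := abs_sub_abs_le_abs_sub (m : ℝ) j
    rw [abs_sub_comm] at this
    linarith
  simpa using inv_anti₀ (by positivity) half_abs_le

theorem tsum_inv_abs_sub_sq_le_four_div_abs (m : ℤ) :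
    ∑' j : {j : ℤ | 2 * |j| < |m|}, (|((j : ℤ) : ℝ) - m|⁻¹) ^ 2 ≤ 4 / |(m : ℝ)| := by
  set near : Finset ℤ := Finset.Icc (-((|m| - 1) / 2)) ((|m| - 1) / 2)
  have near_eq : (near : Set ℤ) = {j | 2 * |j| < |m|} := coe_Icc_eq_setOf_two_mul_abs_lt |m|
  have card_near : (near.card : ℝ) ≤ |(m : ℝ)| := by
    have : (near.card : ℤ) ≤ |m| := by
      rw [Int.card_Icc]
      have := abs_nonneg m
      omega
    exact_mod_cast this
  have term_le : ∀ j ∈ near, (|(j : ℝ) - m|⁻¹) ^ 2 ≤ (2 / |(m : ℝ)|) ^ 2 := fun j hj => by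
    gcongr
    exact inv_abs_sub_le_two_div_abs (near_eq.subset hj)
  rw [← near_eq, Finset.tsum_subtype' near fun j : ℤ => (|(j : ℝ) - m|⁻¹) ^ 2]
  calc ∑ j ∈ near, (|(j : ℝ) - m|⁻¹) ^ 2
      ≤ near.card • (2 / |(m : ℝ)|) ^ 2 := Finset.sum_le_card_nsmul near _ _ term_le
    _ ≤ |(m : ℝ)| * (2 / |(m : ℝ)|) ^ 2 := by
      rw [nsmul_eq_mul]
      gcongr
    _ = 4 / |(m : ℝ)| := by
      rcases eq_or_ne |(m : ℝ)| 0 with abs_m | abs_m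
      · simp [abs_m]
      · field_simp
        norm_num

end InverseDistance

section WeightedSum

variable {f : ℤ → ℝ}

theorem summable_div_abs_sub (hf : Summable fun j => f j ^ 2) (m : ℤ) :
    Summable fun j : ℤ => f j / |(j : ℝ) - m| :=
  summable_mul_of_summable_sq hf (hasSum_inv_abs_sub_sq m).summable

theorem tsum_div_abs_sub_le (hf : Summable fun j => f j ^ 2) (m : ℤ) :
    ∑' j : ℤ, f j / |(j : ℝ) - m| ≤
      2 * (√(∑' j, f j ^ 2) / √|(m : ℝ)| + √(∑' j : {j : ℤ | |m| ≤ 2 * |j|}, f j ^ 2)) := by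
  set far : Set ℤ := {j | |m| ≤ 2 * |j|}
  have far_compl : farᶜ = {j | 2 * |j| < |m|} := by ext j; simp [far]
  have sqrt_four : √(4 : ℝ) = 2 := by
    rw [show (4 : ℝ) = 2 ^ 2 by norm_num, Real.sqrt_sq zero_le_two]
  have far_weight : √(∑' j : far, (|((j : ℤ) : ℝ) - m|⁻¹) ^ 2) ≤ 2 :=
    sqrt_four ▸ Real.sqrt_le_sqrt (tsum_subtype_inv_abs_sub_sq_le_four m far)
  have near_weight : √(∑' j : ↑farᶜ, (|((j : ℤ) : ℝ) - m|⁻¹) ^ 2) ≤ 2 / √|(m : ℝ)| := by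
    rw [far_compl, ← sqrt_four, ← Real.sqrt_div zero_le_four]
    exact Real.sqrt_le_sqrt (tsum_inv_abs_sub_sq_le_four_div_abs m)
  have near_norm : √(∑' j : ↑farᶜ, f j ^ 2) ≤ √(∑' j, f j ^ 2) :=
    Real.sqrt_le_sqrt (hf.tsum_subtype_le _ farᶜ fun _ => sq_nonneg _)
  calc ∑' j : ℤ, f j * |(j : ℝ) - m|⁻¹
      ≤ √(∑' j : far, f j ^ 2) * √(∑' j : far, (|((j : ℤ) : ℝ) - m|⁻¹) ^ 2) +
          √(∑' j : ↑farᶜ, f j ^ 2) * √(∑' j : ↑farᶜ, (|((j : ℤ) : ℝ) - m|⁻¹) ^ 2) :=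
        tsum_mul_le_sqrt_mul_sqrt_add_compl hf (hasSum_inv_abs_sub_sq m).summable far
    _ ≤ √(∑' j : far, f j ^ 2) * 2 + √(∑' j, f j ^ 2) * (2 / √|(m : ℝ)|) := by gcongr
    _ = 2 * (√(∑' j, f j ^ 2) / √|(m : ℝ)| + √(∑' j : far, f j ^ 2)) := by ring

end WeightedSum

-- For `m = 0` the quotient by `√|m|` is `0`, and the estimate holds with the second term alone.
theorem stmt_8_general {E : Type*} [SeminormedAddGroup E] (σ : ℤ → E)
    (hσ : Summable fun j => ‖σ j‖ ^ 2) (m : ℤ) :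
    Summable (fun j : {j : ℤ // j ≠ m} => ‖σ (j : ℤ)‖ / ((|(j : ℤ) - m| : ℤ) : ℝ)) ∧
    (∑' j : {j : ℤ // j ≠ m}, ‖σ (j : ℤ)‖ / ((|(j : ℤ) - m| : ℤ) : ℝ)) ≤
      2 * (√(∑' j, ‖σ j‖ ^ 2) / √|(m : ℝ)|
          + √(∑' j : {j : ℤ // |m| ≤ 2 * |(j : ℤ)|}, ‖σ (j : ℤ)‖ ^ 2)) := by
  push_cast
  have summable_all := summable_div_abs_sub hσ m
  exact ⟨summable_all.subtype {j | j ≠ m},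
    (summable_all.tsum_subtype_le _ {j | j ≠ m} fun j => by positivity).trans
      (tsum_div_abs_sub_le hσ m)⟩

/-- For every `σ ∈ ℓ²(ℤ,ℂ)` and every `m ∈ ℤ` with `|m| ≥ 2`, the series
`∑_{j ≠ m} |σ j|/|j - m|` converges and is bounded by
`2 (‖σ‖/(|m|-1)^{1/2} + (∑_{2|j| ≥ |m|} |σ j|²)^{1/2})`. -/
theorem stmt_8 (σ : ℤ → ℂ) (hσ : Summable fun j => ‖σ j‖ ^ 2) (m : ℤ) (hm : 2 ≤ |m|) :
    Summable (fun j : {j : ℤ // j ≠ m} => ‖σ (j : ℤ)‖ / ((|(j : ℤ) - m| : ℤ) : ℝ)) ∧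
    (∑' j : {j : ℤ // j ≠ m}, ‖σ (j : ℤ)‖ / ((|(j : ℤ) - m| : ℤ) : ℝ)) ≤
      2 * (Real.sqrt (∑' j, ‖σ j‖ ^ 2) / Real.sqrt ((|m| : ℝ) - 1)
          + Real.sqrt (∑' j : {j : ℤ // |m| ≤ 2 * |(j : ℤ)|}, ‖σ (j : ℤ)‖ ^ 2)) := by
  have sub_one_pos : 0 < |(m : ℝ)| - 1 := by
    have : (2 : ℝ) ≤ |(m : ℝ)| := by exact_mod_cast hm
    linarith
  refine (stmt_8_general σ hσ m).imp_right fun bound => bound.trans ?_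
  gcongr
  exact sub_le_self _ zero_le_one
end

section
/- Let a, b ∈ ℂ and let [a,b] := {t·a + (1−t)·b : t ∈ [0,1]} be the closed segment joining them. Let U ⊆ ℂ be open with [a,b] ⊆ U, let f : ℂ → ℂ be holomorphic on U, and let w : ℂ → ℂ be holomorphic on ℂ ∖ [a,b] with w(λ)² = (λ − a)(λ − b) for all λ ∉ [a,b]. Let γ : [0,1] → ℂ be a continuously differentiable closed curve (γ(0) = γ(1)) whose image is contained in U ∖ [a,b], such that for every z ∈ [a,b] the winding number (1/(2πi))·∫₀¹ γ′(t)/(γ(t) − z) dt equals 1, and for every z ∈ ℂ ∖ U this winding number equals 0. Then |∫₀¹ (f(γ(t))/w(γ(t)))·γ′(t) dt| ≤ 2π · max_{λ ∈ [a,b]} |f(λ)|. -/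
open Set
open Filter MeasureTheory Metric Topology
open Function (uncurry)
open scoped Real

/-!
Let `J` wrap the unit circle around `[a,b]`. Off the segment, `1 / w` is, up to a constant sign on
the connected image of `γ`, the average over the unit circle of `x ↦ 1 / (z - J x)`. By Fubini and
the homological Cauchy formula, `∮_γ f / w` is therefore `± 2πi` times the average of `f ∘ J` over
the unit circle, whose modulus is at most the maximum of `|f|` on `[a,b]`. The Cauchy formula is
proved by Dixon's argument: an entire function built from the divided differences of `f` tends to
`0` at infinity, hence vanishes.
-/

section HolomorphicFamilies

variable {E : Type*} [NormedAddCommGroup E] [NormedSpace ℂ E] [CompleteSpace E]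

theorem continuousOn_deriv_of_continuousOn_uncurry {X : Type*} [TopologicalSpace X]
    {F : ℂ → X → E} {V : Set ℂ} {K : Set X} (hV : IsOpen V)
    (hF : ContinuousOn (uncurry F) (V ×ˢ K))
    (hd : ∀ x ∈ K, DifferentiableOn ℂ (F · x) V) :
    ContinuousOn (fun q : ℂ × X => deriv (F · q.2) q.1) (V ×ˢ K) := by
  rintro ⟨z₀, x₀⟩ ⟨hz₀ : z₀ ∈ V, hx₀ : x₀ ∈ K⟩
  have htend : TendstoLocallyUniformlyOn (fun (q : ℂ × X) z => F z q.2) (F · x₀)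
      (𝓝[V ×ˢ K] (z₀, x₀)) V := by
    rw [tendstoLocallyUniformlyOn_iff_forall_tendsto]
    intro z hz
    have hright : Tendsto (fun p : (ℂ × X) × ℂ => F p.2 p.1.2)
        (𝓝[V ×ˢ K] (z₀, x₀) ×ˢ 𝓝[V] z) (𝓝 (F z x₀)) := by
      have hpair : Tendsto (fun p : (ℂ × X) × ℂ => (p.2, p.1.2))
          (𝓝[V ×ˢ K] (z₀, x₀) ×ˢ 𝓝[V] z) (𝓝[V ×ˢ K] (z, x₀)) := by
        rw [nhdsWithin_prod_eq, nhdsWithin_prod_eq]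
        exact tendsto_snd.prodMk (tendsto_snd.comp tendsto_fst)
      exact (hF (z, x₀) ⟨hz, hx₀⟩).tendsto.comp hpair
    have hleft : Tendsto (fun p : (ℂ × X) × ℂ => F p.2 x₀)
        (𝓝[V ×ˢ K] (z₀, x₀) ×ˢ 𝓝[V] z) (𝓝 (F z x₀)) :=
      ((hd x₀ hx₀).continuousOn z hz).tendsto.comp tendsto_snd
    exact (hleft.prodMk_nhds hright).mono_right (nhds_le_uniformity _)
  have hholo : ∀ᶠ q : ℂ × X in 𝓝[V ×ˢ K] (z₀, x₀), DifferentiableOn ℂ (F · q.2) V :=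
    eventually_mem_nhdsWithin.mono fun q hq => hd q.2 hq.2
  have hcont : ContinuousOn (deriv (F · x₀)) V := (hd x₀ hx₀).deriv hV |>.continuousOn
  refine (htend.deriv hholo hV).tendsto_comp (hcont z₀ hz₀) hz₀ ?_
  rw [nhdsWithin_prod_eq]
  exact tendsto_fst

theorem hasDerivAt_intervalIntegral_of_continuousOn_uncurry {F : ℂ → ℝ → E} {V : Set ℂ} {α β : ℝ}
    (hV : IsOpen V) (hF : ContinuousOn (uncurry F) (V ×ˢ uIcc α β))
    (hd : ∀ t ∈ uIcc α β, DifferentiableOn ℂ (F · t) V) {z : ℂ} (hz : z ∈ V) :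
    HasDerivAt (fun z => ∫ t in α..β, F z t) (∫ t in α..β, deriv (F · t) z) z := by
  have hF' := continuousOn_deriv_of_continuousOn_uncurry hV hF hd
  have hcont : ∀ y ∈ V, ContinuousOn (F y) (uIcc α β) := fun y hy =>
    hF.comp (f := fun t => (y, t)) (by fun_prop) fun t ht => ⟨hy, ht⟩
  have hcont' : ContinuousOn (fun t => deriv (F · t) z) (uIcc α β) :=
    hF'.comp (f := fun t => (z, t)) (by fun_prop) fun t ht => ⟨hz, ht⟩
  obtain ⟨δ, hδ, hball⟩ := nhds_basis_closedBall.mem_iff.mp (hV.mem_nhds hz)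
  obtain ⟨M, hM⟩ := ((isCompact_closedBall z δ).prod isCompact_uIcc).exists_bound_of_continuousOn
    (hF'.mono (prod_mono hball Subset.rfl))
  have hsub : uIoc α β ⊆ uIcc α β := uIoc_subset_uIcc
  refine (intervalIntegral.hasDerivAt_integral_of_dominated_loc_of_deriv_le
    (F' := fun y t => deriv (F · t) y) (bound := fun _ => M) (closedBall_mem_nhds z hδ) ?_
    (hcont z hz).intervalIntegrable ?_ ?_ (intervalIntegrable_const (μ := volume)) ?_).2
  · filter_upwards [hV.mem_nhds hz] with y hy
    exact (hcont y hy).mono hsub |>.aestronglyMeasurable measurableSet_uIoc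
  · exact hcont'.mono hsub |>.aestronglyMeasurable measurableSet_uIoc
  · exact ae_of_all _ fun t ht y hy => hM (y, t) ⟨hy, hsub ht⟩
  · exact ae_of_all _ fun t ht y hy =>
      ((hd t (hsub ht)).differentiableAt (hV.mem_nhds (hball hy))).hasDerivAt

end HolomorphicFamilies

section DividedSlope

theorem dslope_comm {𝕜 E : Type*} [NontriviallyNormedField 𝕜] [NormedAddCommGroup E]
    [NormedSpace 𝕜 E] (f : 𝕜 → E) (x y : 𝕜) : dslope f x y = dslope f y x := by
  rcases eq_or_ne x y with rfl | h
  · rfl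
  · rw [dslope_of_ne f h.symm, dslope_of_ne f h, slope_comm]

variable {𝕜 E : Type*} [RCLike 𝕜] [NormedAddCommGroup E] [NormedSpace 𝕜 E] {f : 𝕜 → E} {U : Set 𝕜}

theorem continuousAt_uncurry_dslope_diag {x : 𝕜} (hf : ContDiffAt 𝕜 1 f x) :
    ContinuousAt (uncurry (dslope f)) (x, x) := by
  have hderiv : ContinuousAt (fun p : 𝕜 × 𝕜 => deriv f p.1) (x, x) :=
    (hf.derivWithin (m := 0) le_rfl).continuousAt.comp (x := (x, x)) (f := Prod.fst)
      continuousAt_fst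
  have hstrict : HasStrictDerivAt f (deriv f x) x := hf.hasStrictDerivAt one_ne_zero
  rw [Metric.continuousAt_iff'] at hderiv ⊢
  intro ε hε
  filter_upwards [hderiv ε hε, (hasDerivAtFilter_iff_isLittleO.mp hstrict).def (half_pos hε)]
    with ⟨y, z⟩ hy hyz
  rw [Function.uncurry_apply_pair, Function.uncurry_apply_pair, dslope_same]
  rcases eq_or_ne y z with rfl | hne
  · rwa [dslope_same]
  · have hsub : y - z ≠ 0 := sub_ne_zero.mpr hne
    have hquot : dslope f y z - deriv f x = (y - z)⁻¹ • (f y - f z - (y - z) • deriv f x) := by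
      rw [dslope_comm, dslope_of_ne f hne, slope_def_module, smul_sub _ (f y - f z),
        inv_smul_smul₀ hsub]
    calc dist (dslope f y z) (deriv f x)
        = ‖y - z‖⁻¹ * ‖f y - f z - (y - z) • deriv f x‖ := by
          rw [dist_eq_norm, hquot, norm_smul, norm_inv]
      _ ≤ ‖y - z‖⁻¹ * (ε / 2 * ‖y - z‖) := by gcongr
      _ = ε / 2 := by field_simp [norm_ne_zero_iff.mpr hsub]
      _ < ε := half_lt_self hε

theorem continuousOn_uncurry_dslope (hU : IsOpen U) (hf : ContDiffOn 𝕜 1 f U) :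
    ContinuousOn (uncurry (dslope f)) (U ×ˢ U) := by
  rintro ⟨x, y⟩ ⟨hx : x ∈ U, hy : y ∈ U⟩
  refine ContinuousAt.continuousWithinAt ?_
  have hx' := hf.contDiffAt (hU.mem_nhds hx)
  rcases eq_or_ne x y with rfl | hne
  · exact continuousAt_uncurry_dslope_diag hx'
  have hfx : ContinuousAt (fun p : 𝕜 × 𝕜 => f p.1) (x, y) :=
    ContinuousAt.comp (f := Prod.fst) hx'.continuousAt continuousAt_fst
  have hfy : ContinuousAt (fun p : 𝕜 × 𝕜 => f p.2) (x, y) :=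
    ContinuousAt.comp (f := Prod.snd) (hf.contDiffAt (hU.mem_nhds hy)).continuousAt continuousAt_snd
  have hslope : ContinuousAt (fun p : 𝕜 × 𝕜 => (p.2 - p.1)⁻¹ • (f p.2 - f p.1)) (x, y) :=
    ((continuousAt_snd.sub continuousAt_fst).inv₀ (sub_ne_zero.mpr hne.symm)).smul (hfy.sub hfx)
  refine hslope.congr ?_
  filter_upwards [(isOpen_ne_fun continuous_fst continuous_snd).mem_nhds hne] with p hp
  rw [uncurry, dslope_of_ne f (Ne.symm hp), slope_def_module]

end DividedSlope

section ContourIntegral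

variable {E : Type*} [NormedAddCommGroup E] [NormedSpace ℂ E]

/-- The contour integral `∮_γ g(ζ) dζ` along a path `γ : [0,1] → ℂ`, encoded as a function on `ℝ`
of which only the values on `[0,1]` matter. -/
noncomputable def contourIntegral (γ : ℝ → ℂ) (g : ℂ → E) : E :=
  ∫ t in (0 : ℝ)..1, derivWithin γ (Icc 0 1) t • g (γ t)

/-- Continuously differentiable closed curves `[0,1] → ℂ`; the one-sided derivatives at the two
endpoints need not agree. -/
structure IsC1Loop (γ : ℝ → ℂ) : Prop where
  contDiffOn : ContDiffOn ℝ 1 γ (Icc 0 1)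
  closed : γ 0 = γ 1

/-- The winding number of `γ` around `z`; it is meaningful only for `z` off the image of `γ`. -/
noncomputable def windingNumber (γ : ℝ → ℂ) (z : ℂ) : ℂ :=
  (2 * π * Complex.I)⁻¹ * contourIntegral γ fun ζ => (ζ - z)⁻¹

variable {γ : ℝ → ℂ}

theorem contourIntegral_congr {g₁ g₂ : ℂ → E} (h : EqOn g₁ g₂ (γ '' Icc 0 1)) :
    contourIntegral γ g₁ = contourIntegral γ g₂ := by
  refine intervalIntegral.integral_congr fun t ht => ?_
  rw [uIcc_of_le zero_le_one] at ht
  simp only [h (mem_image_of_mem γ ht)]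

theorem contourIntegral_const_smul (c : ℂ) (g : ℂ → E) :
    contourIntegral γ (fun ζ => c • g ζ) = c • contourIntegral γ g := by
  simp only [contourIntegral, smul_comm _ c, intervalIntegral.integral_smul]

theorem contourIntegral_smul_const [CompleteSpace E] (g : ℂ → ℂ) (v : E) :
    contourIntegral γ (fun ζ => g ζ • v) = contourIntegral γ g • v := by
  simp only [contourIntegral, ← smul_assoc, intervalIntegral.integral_smul_const]

theorem contourIntegral_inv_sub (γ : ℝ → ℂ) (z : ℂ) :
    contourIntegral γ (fun ζ => (ζ - z)⁻¹) = 2 * π * Complex.I * windingNumber γ z :=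
  (mul_inv_cancel_left₀ Complex.two_pi_I_ne_zero _).symm

theorem isCompact_trace (hγ : ContDiffOn ℝ 1 γ (Icc 0 1)) : IsCompact (γ '' Icc 0 1) :=
  isCompact_Icc.image_of_continuousOn hγ.continuousOn

theorem continuousOn_derivWithin_path (hγ : ContDiffOn ℝ 1 γ (Icc 0 1)) :
    ContinuousOn (derivWithin γ (Icc 0 1)) (uIcc 0 1) := by
  rw [uIcc_of_le zero_le_one]
  exact hγ.continuousOn_derivWithin (uniqueDiffOn_Icc zero_lt_one) le_rfl

theorem continuousOn_contour_integrand (hγ : ContDiffOn ℝ 1 γ (Icc 0 1)) {g : ℂ → E}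
    (hg : ContinuousOn g (γ '' Icc 0 1)) :
    ContinuousOn (fun t => derivWithin γ (Icc 0 1) t • g (γ t)) (uIcc 0 1) := by
  refine (continuousOn_derivWithin_path hγ).smul ?_
  rw [uIcc_of_le zero_le_one]
  exact hg.comp hγ.continuousOn (mapsTo_image γ _)

theorem contourIntegral_sub (hγ : ContDiffOn ℝ 1 γ (Icc 0 1)) {g₁ g₂ : ℂ → E}
    (h₁ : ContinuousOn g₁ (γ '' Icc 0 1)) (h₂ : ContinuousOn g₂ (γ '' Icc 0 1)) :
    contourIntegral γ (fun ζ => g₁ ζ - g₂ ζ) = contourIntegral γ g₁ - contourIntegral γ g₂ := by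
  simp only [contourIntegral, smul_sub]
  exact intervalIntegral.integral_sub (continuousOn_contour_integrand hγ h₁).intervalIntegrable
    (continuousOn_contour_integrand hγ h₂).intervalIntegrable

theorem exists_norm_contourIntegral_le (E : Type*) [NormedAddCommGroup E] [NormedSpace ℂ E]
    (hγ : ContDiffOn ℝ 1 γ (Icc 0 1)) :
    ∃ L : ℝ, ∀ (g : ℂ → E) (M : ℝ), (∀ ζ ∈ γ '' Icc 0 1, ‖g ζ‖ ≤ M) →
      ‖contourIntegral γ g‖ ≤ L * M := by
  obtain ⟨L, hL⟩ := isCompact_uIcc.exists_bound_of_continuousOn (continuousOn_derivWithin_path hγ)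
  refine ⟨L, fun g M hM => ?_⟩
  have hbound : ∀ t ∈ uIoc (0 : ℝ) 1, ‖derivWithin γ (Icc 0 1) t • g (γ t)‖ ≤ L * M := by
    intro t ht
    have ht' := uIoc_subset_uIcc ht
    rw [norm_smul]
    gcongr
    · exact (norm_nonneg _).trans (hL t ht')
    · exact hL t ht'
    · exact hM _ (mem_image_of_mem γ (uIcc_of_le (zero_le_one' ℝ) ▸ ht'))
  simpa [contourIntegral] using intervalIntegral.norm_integral_le_of_norm_le_const hbound

theorem hasDerivAt_contourIntegral [CompleteSpace E] (hγ : ContDiffOn ℝ 1 γ (Icc 0 1))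
    {F : ℂ → ℂ → E} {V : Set ℂ} (hV : IsOpen V)
    (hF : ContinuousOn (uncurry F) (V ×ˢ (γ '' Icc 0 1)))
    (hd : ∀ ζ ∈ γ '' Icc 0 1, DifferentiableOn ℂ (F · ζ) V) {z : ℂ} (hz : z ∈ V) :
    HasDerivAt (fun z => contourIntegral γ (F z))
      (contourIntegral γ fun ζ => deriv (F · ζ) z) z := by
  have hmem : ∀ t ∈ uIcc (0 : ℝ) 1, γ t ∈ γ '' Icc 0 1 := fun t ht =>
    mem_image_of_mem γ (uIcc_of_le (zero_le_one' ℝ) ▸ ht)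
  have hγc : ContinuousOn γ (uIcc 0 1) := by
    simpa only [uIcc_of_le (zero_le_one' ℝ)] using hγ.continuousOn
  have hcont : ContinuousOn (uncurry fun z t => derivWithin γ (Icc 0 1) t • F z (γ t))
      (V ×ˢ uIcc 0 1) := by
    refine ((continuousOn_derivWithin_path hγ).comp continuousOn_snd fun q hq => hq.2).smul
      (hF.comp (f := fun q : ℂ × ℝ => (q.1, γ q.2)) ?_ fun q hq => ⟨hq.1, hmem _ hq.2⟩)
    exact continuousOn_fst.prodMk (hγc.comp continuousOn_snd fun q hq => hq.2)
  have hholo : ∀ t ∈ uIcc (0 : ℝ) 1,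
      DifferentiableOn ℂ (fun z => derivWithin γ (Icc 0 1) t • F z (γ t)) V := fun t ht =>
    (hd _ (hmem t ht)).const_smul (derivWithin γ (Icc 0 1) t)
  refine (hasDerivAt_intervalIntegral_of_continuousOn_uncurry hV hcont hholo hz).congr_deriv
    (intervalIntegral.integral_congr fun t ht => ?_)
  have hdiff : DifferentiableAt ℂ (F · (γ t)) z :=
    (hd _ (hmem t ht)).differentiableAt (hV.mem_nhds hz)
  exact (deriv_fun_const_smul (derivWithin γ (Icc 0 1) t) hdiff)

theorem IsC1Loop.contourIntegral_eq_zero [CompleteSpace E] (hγ : IsC1Loop γ) {g G : ℂ → E}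
    (hg : ContinuousOn g (γ '' Icc 0 1)) (hG : ∀ ζ ∈ γ '' Icc 0 1, HasDerivAt G (g ζ) ζ) :
    contourIntegral γ g = 0 := by
  have hcont : ContinuousOn (G ∘ γ) (Icc 0 1) := fun t ht =>
    (hG _ (mem_image_of_mem γ ht)).continuousAt.comp_continuousWithinAt
      (hγ.contDiffOn.continuousOn t ht)
  have hderiv : ∀ t ∈ Ioo (0 : ℝ) 1,
      HasDerivAt (G ∘ γ) (derivWithin γ (Icc 0 1) t • g (γ t)) t := fun t ht =>
    HasDerivAt.scomp t (hG _ (mem_image_of_mem γ (Ioo_subset_Icc_self ht)))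
      (((hγ.contDiffOn.differentiableOn one_ne_zero t
        (Ioo_subset_Icc_self ht)).hasDerivWithinAt).hasDerivAt (Icc_mem_nhds ht.1 ht.2))
  rw [contourIntegral, intervalIntegral.integral_eq_sub_of_hasDerivAt_of_le zero_le_one hcont
    hderiv (continuousOn_contour_integrand hγ.contDiffOn hg).intervalIntegrable,
    Function.comp_apply, Function.comp_apply, hγ.closed, sub_self]

end ContourIntegral

section CauchyFormula

variable {E : Type*} [NormedAddCommGroup E] [NormedSpace ℂ E] {γ : ℝ → ℂ} {f : ℂ → E}
  {U : Set ℂ} {z : ℂ}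

theorem continuousOn_cauchyKernel_smul {T : Set ℂ} (hf : ContinuousOn f T) :
    ContinuousOn (uncurry fun z ζ => (ζ - z)⁻¹ • f ζ) (Tᶜ ×ˢ T) := by
  refine ContinuousOn.smul (ContinuousOn.inv₀ (by fun_prop) fun q hq => ?_)
    (hf.comp continuousOn_snd fun q hq => hq.2)
  exact sub_ne_zero.mpr fun h => hq.1 (h ▸ hq.2)

theorem differentiableOn_contourIntegral_cauchyKernel [CompleteSpace E]
    (hγ : ContDiffOn ℝ 1 γ (Icc 0 1)) (hf : ContinuousOn f (γ '' Icc 0 1)) :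
    DifferentiableOn ℂ (fun z => contourIntegral γ fun ζ => (ζ - z)⁻¹ • f ζ) (γ '' Icc 0 1)ᶜ := by
  intro z hz
  refine (hasDerivAt_contourIntegral hγ (isCompact_trace hγ).isClosed.isOpen_compl
    (continuousOn_cauchyKernel_smul hf) (fun ζ hζ => ?_) hz).differentiableAt.differentiableWithinAt
  refine DifferentiableOn.smul_const (DifferentiableOn.inv (by fun_prop) fun y hy => ?_) (f ζ)
  exact sub_ne_zero.mpr fun h => hy (h ▸ hζ)

theorem IsC1Loop.hasDerivAt_windingNumber (hγ : IsC1Loop γ) (hz : z ∉ γ '' Icc 0 1) :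
    HasDerivAt (windingNumber γ) 0 z := by
  have hne : ∀ y ∈ (γ '' Icc 0 1)ᶜ, ∀ ζ ∈ γ '' Icc 0 1, ζ - y ≠ 0 := fun y hy ζ hζ =>
    sub_ne_zero.mpr fun h => hy (h ▸ hζ)
  have hker : ∀ ζ ∈ γ '' Icc 0 1, ∀ y ∈ (γ '' Icc 0 1)ᶜ,
      HasDerivAt (fun y => (ζ - y)⁻¹) (((ζ - y) ^ 2)⁻¹) y := fun ζ hζ y hy => by
    simpa using ((hasDerivAt_id y).const_sub ζ).fun_inv (hne y hy ζ hζ)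
  have hzero : contourIntegral γ (fun ζ => deriv (fun y => (ζ - y)⁻¹) z) = 0 := by
    rw [contourIntegral_congr fun ζ hζ => (hker ζ hζ z hz).deriv]
    refine hγ.contourIntegral_eq_zero (G := fun ζ => -(ζ - z)⁻¹)
      (ContinuousOn.inv₀ (by fun_prop) fun ζ hζ => pow_ne_zero 2 (hne z hz ζ hζ)) fun ζ hζ => ?_
    simpa [neg_div] using (((hasDerivAt_id ζ).sub_const z).fun_inv (hne z hz ζ hζ)).fun_neg
  have hcauchy := hasDerivAt_contourIntegral hγ.contDiffOn
    (isCompact_trace hγ.contDiffOn).isClosed.isOpen_compl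
    (ContinuousOn.inv₀ (by fun_prop) fun q hq => hne q.1 hq.1 q.2 hq.2)
    (fun ζ hζ y hy => (hker ζ hζ y hy).differentiableAt.differentiableWithinAt) hz
  exact (hcauchy.const_mul (2 * π * Complex.I)⁻¹).congr_deriv (by rw [hzero, mul_zero])

theorem IsC1Loop.isOpen_windingNumber_eq (hγ : IsC1Loop γ) (n : ℂ) :
    IsOpen {z | z ∉ γ '' Icc 0 1 ∧ windingNumber γ z = n} :=
  (isCompact_trace hγ.contDiffOn).isClosed.isOpen_compl.isOpen_inter_preimage_of_deriv_eq_zero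
    (fun _ hz => (hγ.hasDerivAt_windingNumber hz).differentiableAt.differentiableWithinAt)
    (fun _ hz => (hγ.hasDerivAt_windingNumber hz).deriv) {n}

theorem IsC1Loop.windingNumber_eq_zero_of_notMem_ball (hγ : IsC1Loop γ) {c : ℂ} {R : ℝ}
    (hball : MapsTo γ (Icc 0 1) (ball c R)) (hz : z ∉ ball c R) : windingNumber γ z = 0 := by
  have hdiff : DifferentiableOn ℂ (fun ζ => (ζ - z)⁻¹) (ball c R) :=
    DifferentiableOn.inv (by fun_prop) fun ζ hζ => sub_ne_zero.mpr fun h => hz (h ▸ hζ)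
  obtain ⟨G, hG⟩ := hdiff.isExactOn_ball
  rw [windingNumber, hγ.contourIntegral_eq_zero (hdiff.continuousOn.mono hball.image_subset)
    fun ζ hζ => hG ζ (hball.image_subset hζ), mul_zero]

theorem IsC1Loop.eventually_windingNumber_eq_zero (hγ : IsC1Loop γ) :
    ∀ᶠ z in cocompact ℂ, z ∉ γ '' Icc 0 1 ∧ windingNumber γ z = 0 := by
  obtain ⟨R, hR⟩ := (isCompact_trace hγ.contDiffOn).isBounded.subset_ball 0
  filter_upwards [(isCompact_closedBall 0 R).compl_mem_cocompact] with z hz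
  have hz' : z ∉ ball 0 R := fun h => hz (ball_subset_closedBall h)
  exact ⟨fun h => hz' (hR h),
    hγ.windingNumber_eq_zero_of_notMem_ball (mapsTo_iff_image_subset.mpr hR) hz'⟩

theorem tendsto_contourIntegral_cauchyKernel_cocompact (hγ : ContDiffOn ℝ 1 γ (Icc 0 1))
    (hf : ContinuousOn f (γ '' Icc 0 1)) :
    Tendsto (fun z => contourIntegral γ fun ζ => (ζ - z)⁻¹ • f ζ) (cocompact ℂ) (𝓝 0) := by
  obtain ⟨L, hL⟩ := exists_norm_contourIntegral_le E hγ
  obtain ⟨M, hM⟩ := (isCompact_trace hγ).exists_bound_of_continuousOn hf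
  obtain ⟨R, hR⟩ := (isCompact_trace hγ).isBounded.subset_closedBall 0
  have hnorm : Tendsto (fun z : ℂ => ‖z‖ - R) (cocompact ℂ) atTop :=
    tendsto_atTop_add_const_right _ (-R) tendsto_norm_cocompact_atTop
  have hlim : Tendsto (fun z : ℂ => L * ((‖z‖ - R)⁻¹ * M)) (cocompact ℂ) (𝓝 0) := by
    simpa using ((tendsto_inv_atTop_zero.comp hnorm).mul_const M).const_mul L
  refine squeeze_zero_norm' ?_ hlim
  filter_upwards [hnorm.eventually_gt_atTop 0] with z hz
  refine hL _ _ fun ζ hζ => ?_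
  have hdist : ‖z‖ - R ≤ ‖ζ - z‖ := by
    have hζR : ‖ζ‖ ≤ R := by simpa using hR hζ
    linarith [norm_sub_norm_le z ζ, norm_sub_rev z ζ]
  rw [norm_smul, norm_inv]
  gcongr
  exact hM ζ hζ

theorem contourIntegral_dslope [CompleteSpace E] (hγ : ContDiffOn ℝ 1 γ (Icc 0 1))
    (hf : ContinuousOn f (γ '' Icc 0 1)) (hz : z ∉ γ '' Icc 0 1) :
    contourIntegral γ (dslope f z) =
      contourIntegral γ (fun ζ => (ζ - z)⁻¹ • f ζ) -
        (2 * π * Complex.I * windingNumber γ z) • f z := by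
  have hne : ∀ ζ ∈ γ '' Icc 0 1, ζ ≠ z := fun ζ hζ h => hz (h ▸ hζ)
  have hker : ContinuousOn (fun ζ => (ζ - z)⁻¹) (γ '' Icc 0 1) :=
    ContinuousOn.inv₀ (by fun_prop) fun ζ hζ => sub_ne_zero.mpr (hne ζ hζ)
  have hexpand : EqOn (dslope f z) (fun ζ => (ζ - z)⁻¹ • f ζ - (ζ - z)⁻¹ • f z) (γ '' Icc 0 1) :=
    fun ζ hζ => by rw [dslope_of_ne f (hne ζ hζ), slope_def_module, smul_sub]
  rw [contourIntegral_congr hexpand,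
    contourIntegral_sub hγ (hker.fun_smul hf) (hker.fun_smul continuousOn_const),
    contourIntegral_smul_const, contourIntegral_inv_sub]

open Classical in
/-- Dixon's auxiliary function in the proof of the homological Cauchy formula. When `γ` lies in `U`
and has winding number `0` around every point off `U`, the two branches agree wherever both are
holomorphic, so that the function is entire. -/
noncomputable def dixonFun (U : Set ℂ) (f : ℂ → E) (γ : ℝ → ℂ) (z : ℂ) : E :=
  if z ∈ U then contourIntegral γ (dslope f z) else contourIntegral γ fun ζ => (ζ - z)⁻¹ • f ζ

theorem dixonFun_eq_contourIntegral_cauchyKernel [CompleteSpace E]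
    (hγ : ContDiffOn ℝ 1 γ (Icc 0 1)) (hf : ContinuousOn f (γ '' Icc 0 1))
    (hz : z ∉ γ '' Icc 0 1 ∧ windingNumber γ z = 0) :
    dixonFun U f γ z = contourIntegral γ fun ζ => (ζ - z)⁻¹ • f ζ := by
  rw [dixonFun]
  split_ifs
  · rw [contourIntegral_dslope hγ hf hz.1, hz.2, mul_zero, zero_smul, sub_zero]
  · rfl

variable [CompleteSpace E]

theorem differentiableOn_contourIntegral_dslope (hU : IsOpen U) (hf : DifferentiableOn ℂ f U)
    (hγ : ContDiffOn ℝ 1 γ (Icc 0 1)) (hγU : γ '' Icc 0 1 ⊆ U) :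
    DifferentiableOn ℂ (fun z => contourIntegral γ (dslope f z)) U := by
  intro z hz
  refine (hasDerivAt_contourIntegral hγ hU ((continuousOn_uncurry_dslope hU (hf.contDiffOn hU)).mono
    (prod_mono_right hγU)) (fun ζ hζ => ?_) hz).differentiableAt.differentiableWithinAt
  simp only [dslope_comm f _ ζ]
  exact (Complex.differentiableOn_dslope (hU.mem_nhds (hγU hζ))).mpr hf

theorem differentiable_dixonFun (hU : IsOpen U) (hf : DifferentiableOn ℂ f U)
    (hγ : IsC1Loop γ) (hγU : γ '' Icc 0 1 ⊆ U) (hwind : ∀ z ∉ U, windingNumber γ z = 0) :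
    Differentiable ℂ (dixonFun U f γ) := by
  intro z
  have hfγ := hf.continuousOn.mono hγU
  by_cases hz : z ∈ U
  · refine ((differentiableOn_contourIntegral_dslope hU hf hγ.contDiffOn hγU).differentiableAt
      (hU.mem_nhds hz)).congr_of_eventuallyEq ?_
    filter_upwards [hU.mem_nhds hz] with y hy using if_pos hy
  · have hout : {y | y ∉ γ '' Icc 0 1 ∧ windingNumber γ y = 0} ∈ 𝓝 z :=
      (hγ.isOpen_windingNumber_eq 0).mem_nhds ⟨fun h => hz (hγU h), hwind z hz⟩
    refine ((differentiableOn_contourIntegral_cauchyKernel hγ.contDiffOn hfγ).differentiableAt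
      (mem_of_superset hout fun y hy => hy.1)).congr_of_eventuallyEq ?_
    filter_upwards [hout] with y hy
    exact dixonFun_eq_contourIntegral_cauchyKernel hγ.contDiffOn hfγ hy

theorem dixonFun_eq_zero (hU : IsOpen U) (hf : DifferentiableOn ℂ f U)
    (hγ : IsC1Loop γ) (hγU : γ '' Icc 0 1 ⊆ U) (hwind : ∀ z ∉ U, windingNumber γ z = 0) (z : ℂ) :
    dixonFun U f γ z = 0 := by
  have hfγ := hf.continuousOn.mono hγU
  refine (differentiable_dixonFun hU hf hγ hγU hwind).apply_eq_of_tendsto_cocompact z ?_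
  refine (tendsto_contourIntegral_cauchyKernel_cocompact hγ.contDiffOn hfγ).congr' ?_
  filter_upwards [hγ.eventually_windingNumber_eq_zero] with y hy
  exact (dixonFun_eq_contourIntegral_cauchyKernel hγ.contDiffOn hfγ hy).symm

theorem contourIntegral_cauchyKernel_smul (hU : IsOpen U) (hf : DifferentiableOn ℂ f U)
    (hγ : IsC1Loop γ) (hγU : γ '' Icc 0 1 ⊆ U) (hwind : ∀ z ∉ U, windingNumber γ z = 0)
    (hz : z ∉ γ '' Icc 0 1) :
    contourIntegral γ (fun ζ => (ζ - z)⁻¹ • f ζ) =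
      (2 * π * Complex.I * windingNumber γ z) • f z := by
  have hzero := dixonFun_eq_zero hU hf hγ hγU hwind z
  rw [dixonFun] at hzero
  split_ifs at hzero with hzU
  · rwa [contourIntegral_dslope hγ.contDiffOn (hf.continuousOn.mono hγU) hz, sub_eq_zero] at hzero
  · rw [hzero, hwind z hzU, mul_zero, zero_smul]

end CauchyFormula

section CircleAverage

variable {E : Type*} [NormedAddCommGroup E] {γ : ℝ → ℂ} {c : ℂ} {R : ℝ}

theorem norm_circleAverage_le_of_forall_mem_sphere [NormedSpace ℝ E] {g : ℂ → E} {M : ℝ}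
    (hM : ∀ x ∈ sphere c |R|, ‖g x‖ ≤ M) : ‖Real.circleAverage g c R‖ ≤ M := by
  have hint : ‖∫ θ in 0..2 * π, g (circleMap c R θ)‖ ≤ M * |2 * π - 0| :=
    intervalIntegral.norm_integral_le_of_norm_le_const fun θ _ =>
      hM _ (circleMap_mem_sphere' c R θ)
  rw [sub_zero, abs_of_pos Real.two_pi_pos] at hint
  rw [Real.circleAverage_def, norm_smul, norm_inv, Real.norm_of_nonneg Real.two_pi_pos.le]
  rwa [inv_mul_le_iff₀ Real.two_pi_pos, mul_comm (2 * π)]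

theorem circleAverage_smul_const [NormedSpace ℂ E] [CompleteSpace E] (g : ℂ → ℂ) (v : E) :
    Real.circleAverage (fun x => g x • v) c R = Real.circleAverage g c R • v := by
  simp only [Real.circleAverage_def, intervalIntegral.integral_smul_const, smul_assoc]

theorem contourIntegral_circleAverage [NormedSpace ℂ E] (hγ : ContDiffOn ℝ 1 γ (Icc 0 1))
    {F : ℂ → ℂ → E} (hF : ContinuousOn (uncurry F) ((γ '' Icc 0 1) ×ˢ sphere c |R|)) :
    contourIntegral γ (fun ζ => Real.circleAverage (F ζ) c R) =
      Real.circleAverage (fun x => contourIntegral γ (F · x)) c R := by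
  have hcont : ContinuousOn
      (uncurry fun t θ => derivWithin γ (Icc 0 1) t • F (γ t) (circleMap c R θ))
      (uIcc 0 1 ×ˢ uIcc 0 (2 * π)) := by
    refine ((continuousOn_derivWithin_path hγ).comp continuousOn_fst fun q hq => hq.1).smul
      (hF.comp (f := fun q : ℝ × ℝ => (γ q.1, circleMap c R q.2)) ?_ fun q hq => ?_)
    · rw [uIcc_of_le zero_le_one]
      exact (hγ.continuousOn.comp continuousOn_fst fun q hq => hq.1).prodMk (by fun_prop)
    · exact ⟨mem_image_of_mem γ (uIcc_of_le (zero_le_one' ℝ) ▸ hq.1), circleMap_mem_sphere' c R q.2⟩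
  have hint := (hcont.integrableOn_compact (μ := volume)
    (isCompact_uIcc.prod isCompact_uIcc)).mono_set (prod_mono uIoc_subset_uIcc uIoc_subset_uIcc)
  simp only [Real.circleAverage_def, contourIntegral, smul_comm _ (2 * π)⁻¹,
    intervalIntegral.integral_smul, ← intervalIntegral_intervalIntegral_swap hint]

theorem continuousOn_circleAverage_of_continuousOn_uncurry [NormedSpace ℝ E] {X : Type*}
    [TopologicalSpace X] {F : X → ℂ → E} {V : Set X}
    (hF : ContinuousOn (uncurry F) (V ×ˢ sphere c |R|)) :
    ContinuousOn (fun z => Real.circleAverage (F z) c R) V := by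
  rw [continuousOn_iff_continuous_domRestrict]
  refine Continuous.const_smul
    (intervalIntegral.continuous_parametric_intervalIntegral_of_continuous' ?_ _ _) _
  have hmem (q : V × ℝ) : ((q.1 : X), circleMap c R q.2) ∈ V ×ˢ sphere c |R| :=
    ⟨q.1.2, circleMap_mem_sphere' c R q.2⟩
  exact hF.comp_continuous (by fun_prop) hmem

end CircleAverage

section Segment

/-- The Joukowski map `x ↦ (x + x⁻¹) / 2`, followed by the affine map sending `-1, 1` to `a, b`; it
wraps the unit circle twice around `[a,b]`. -/
noncomputable def segmentCircleMap (a b x : ℂ) : ℂ :=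
  (a + b) / 2 + (b - a) / 4 * (x + x⁻¹)

variable {a b z : ℂ}

theorem segmentCircleMap_mem_segment (a b : ℂ) {x : ℂ} (hx : ‖x‖ = 1) :
    segmentCircleMap a b x ∈ segment ℝ a b := by
  have hre : |x.re| ≤ 1 := hx ▸ Complex.abs_re_le_norm x
  obtain ⟨hneg, hpos⟩ := abs_le.mp hre
  refine ⟨(1 - x.re) / 2, (1 + x.re) / 2, by linarith, by linarith, by ring, ?_⟩
  have hsum : x + x⁻¹ = 2 * x.re := by
    rw [Complex.inv_eq_conj hx, Complex.add_conj]; push_cast; ring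
  rw [segmentCircleMap, hsum]
  simp only [Complex.real_smul]
  push_cast
  ring

theorem continuousOn_segmentCircleMap (a b : ℂ) :
    ContinuousOn (segmentCircleMap a b) (sphere 0 1) := by
  unfold segmentCircleMap
  have : ∀ x ∈ sphere (0 : ℂ) 1, x ≠ 0 := fun x hx => ne_of_mem_sphere hx one_ne_zero
  fun_prop (disch := assumption)

theorem norm_circleAverage_segmentCircleMap_le {E : Type*} [NormedAddCommGroup E] [NormedSpace ℝ E]
    {f : ℂ → E} (hf : ContinuousOn f (segment ℝ a b)) :
    ‖Real.circleAverage (fun x => f (segmentCircleMap a b x)) 0 1‖ ≤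
      sSup ((fun z => ‖f z‖) '' segment ℝ a b) := by
  have hcompact : IsCompact (segment ℝ a b) := by
    rw [← convexHull_pair]
    exact (toFinite {a, b}).isCompact_convexHull ℝ
  have hbdd := (hcompact.image_of_continuousOn hf.norm).bddAbove
  refine norm_circleAverage_le_of_forall_mem_sphere fun x hx => le_csSup hbdd ?_
  exact mem_image_of_mem _ (segmentCircleMap_mem_segment a b (by simpa using hx))

theorem exists_add_eq_mul_eq_norm_le (u v : ℂ) :
    ∃ p q : ℂ, p + q = u ∧ p * q = v ∧ ‖q‖ ≤ ‖p‖ := by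
  obtain ⟨s, hs⟩ := IsAlgClosed.exists_pow_nat_eq (u ^ 2 - 4 * v) two_pos
  have hmul : (u + s) / 2 * ((u - s) / 2) = v := by linear_combination (-1 / 4) * hs
  rcases le_total ‖(u - s) / 2‖ ‖(u + s) / 2‖ with hle | hle
  · exact ⟨_, _, by ring, hmul, hle⟩
  · exact ⟨_, _, by ring, (mul_comm _ _).trans hmul, hle⟩

/-- With these parameters, `z - segmentCircleMap a b x` factors as `p (1 - r x) (1 - r x⁻¹)`. -/
theorem exists_joukowski_parameters (hz : z ∉ segment ℝ a b) :
    ∃ p r : ℂ, ‖r‖ < 1 ∧ z - (a + b) / 2 = p * (1 + r ^ 2) ∧ (b - a) / 4 = p * r := by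
  obtain ⟨p, q, hadd, hmul, hle⟩ :=
    exists_add_eq_mul_eq_norm_le (z - (a + b) / 2) (((b - a) / 4) ^ 2)
  have hp : p ≠ 0 := by
    rintro rfl
    obtain rfl : q = 0 := norm_le_zero_iff.mp (by simpa using hle)
    have hba : b - a = 0 := by simpa using hmul.symm
    refine hz ?_
    rw [show z = a by linear_combination -hadd + hba / 2]
    exact left_mem_segment ℝ a b
  obtain ⟨r, hd⟩ : p ∣ (b - a) / 4 := hp.isUnit.dvd
  have hq : q = p * r ^ 2 := mul_left_cancel₀ hp (by rw [hmul, hd]; ring)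
  have hz' : z - (a + b) / 2 = p * (1 + r ^ 2) := by rw [← hadd, hq]; ring
  refine ⟨p, r, lt_of_le_of_ne ?_ fun hr => hz ?_, hz', hd⟩
  · rw [hq, norm_mul, norm_pow, mul_le_iff_le_one_right (norm_pos_iff.mpr hp)] at hle
    exact (sq_le_one_iff₀ (norm_nonneg r)).mp hle
  · have hr0 : r ≠ 0 := norm_ne_zero_iff.mp (hr ▸ one_ne_zero)
    have hzr : z = segmentCircleMap a b r := by
      rw [segmentCircleMap, hd]
      field_simp
      linear_combination 2 * hz'
    exact hzr ▸ segmentCircleMap_mem_segment a b hr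

theorem circleAverage_inv_one_sub_mul {r : ℂ} (hr : ‖r‖ < 1) :
    Real.circleAverage (fun x => ((1 - r * x) * (1 - r * x⁻¹))⁻¹) 0 1 = (1 - r ^ 2)⁻¹ := by
  have hne : ∀ x : ℂ, ‖x‖ ≤ 1 → 1 - r * x ≠ 0 := fun x hx h => by
    have hone : ‖r‖ * ‖x‖ = 1 := by rw [← norm_mul, ← sub_eq_zero.mp h, norm_one]
    nlinarith [norm_nonneg r, norm_nonneg x]
  have hdiff : DifferentiableOn ℂ (fun x => (1 - r * x)⁻¹) (closedBall 0 |1|) :=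
    DifferentiableOn.inv (by fun_prop) fun x hx => hne x (by simpa using hx)
  have hcauchy := (hdiff.diffContOnCl_ball Subset.rfl).circleAverage_smul_div
    (mem_ball_zero_iff.mpr (by rwa [abs_one]))
  rw [sq, ← hcauchy]
  refine Real.circleAverage_congr_sphere fun x hx => ?_
  have hx0 : x ≠ 0 := ne_of_mem_sphere hx (by norm_num)
  have hfactor : 1 - r * x⁻¹ = (x - r) / x := by field_simp
  simp only [hfactor, mul_inv, inv_div, smul_eq_mul, sub_zero, mul_comm]

/-- The average over the unit circle of `x ↦ (z - J x)⁻¹`, with `J` the parametrization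
`segmentCircleMap` of `[a,b]`; it is a holomorphic branch of `1 / √((z - a) (z - b))` off
`[a,b]`. -/
noncomputable def invSqrtBranch (a b z : ℂ) : ℂ :=
  Real.circleAverage (fun x => (z - segmentCircleMap a b x)⁻¹) 0 1

theorem invSqrtBranch_sq_mul (hz : z ∉ segment ℝ a b) :
    invSqrtBranch a b z ^ 2 * ((z - a) * (z - b)) = 1 := by
  obtain ⟨p, r, hr, hsum, hprod⟩ := exists_joukowski_parameters hz
  have hfactor : EqOn (fun x => (z - segmentCircleMap a b x)⁻¹)
      (fun x => p⁻¹ • ((1 - r * x) * (1 - r * x⁻¹))⁻¹) (sphere 0 |1|) := fun x hx => by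
    have hx0 : x ≠ 0 := ne_of_mem_sphere hx (by norm_num)
    have hsub : z - segmentCircleMap a b x = p * ((1 - r * x) * (1 - r * x⁻¹)) := by
      rw [segmentCircleMap, hprod]
      field_simp
      linear_combination 2 * x * hsum
    simp only [hsub, smul_eq_mul, mul_inv]
  have hbranch : invSqrtBranch a b z = p⁻¹ * (1 - r ^ 2)⁻¹ := by
    rw [invSqrtBranch, Real.circleAverage_congr_sphere hfactor, Real.circleAverage_fun_smul,
      circleAverage_inv_one_sub_mul hr, smul_eq_mul]
  have hprod' : (z - a) * (z - b) = (p * (1 - r ^ 2)) ^ 2 := by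
    linear_combination (z - (a + b) / 2 + p * (1 + r ^ 2)) * hsum -
      4 * ((b - a) / 4 + p * r) * hprod
  have hne : (p * (1 - r ^ 2)) ^ 2 ≠ 0 := by
    rw [← hprod']
    refine mul_ne_zero (sub_ne_zero.mpr ?_) (sub_ne_zero.mpr ?_) <;> rintro rfl
    exacts [hz (left_mem_segment ℝ _ _), hz (right_mem_segment ℝ _ _)]
  rw [hbranch, hprod', ← mul_inv, inv_pow, inv_mul_cancel₀ hne]

theorem continuousOn_cauchyKernel_segmentCircleMap (a b : ℂ) :
    ContinuousOn (uncurry fun z x => (z - segmentCircleMap a b x)⁻¹)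
      ((segment ℝ a b)ᶜ ×ˢ sphere 0 1) := by
  refine ContinuousOn.inv₀ (continuousOn_fst.sub
    ((continuousOn_segmentCircleMap a b).comp continuousOn_snd fun q hq => hq.2)) fun q hq => ?_
  exact sub_ne_zero.mpr fun h => hq.1
    (h ▸ segmentCircleMap_mem_segment a b (mem_sphere_zero_iff_norm.mp hq.2))

theorem continuousOn_invSqrtBranch (a b : ℂ) : ContinuousOn (invSqrtBranch a b) (segment ℝ a b)ᶜ :=
  continuousOn_circleAverage_of_continuousOn_uncurry
    (by simpa only [abs_one] using continuousOn_cauchyKernel_segmentCircleMap a b)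

theorem exists_norm_eq_one_inv_eq_mul_invSqrtBranch {w : ℂ → ℂ} {S : Set ℂ}
    (hS : IsPreconnected S) (hSab : Disjoint S (segment ℝ a b)) (hw : ContinuousOn w S)
    (hw2 : ∀ z ∈ S, w z ^ 2 = (z - a) * (z - b)) :
    ∃ ε : ℂ, ‖ε‖ = 1 ∧ ∀ z ∈ S, (w z)⁻¹ = ε * invSqrtBranch a b z := by
  have hab : ∀ z ∈ S, z ∉ segment ℝ a b := fun z hz => hSab.notMem_of_mem_left hz
  have hsq : ∀ z ∈ S, invSqrtBranch a b z ^ 2 * w z ^ 2 = 1 := fun z hz => by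
    rw [hw2 z hz, invSqrtBranch_sq_mul (hab z hz)]
  have hw0 : ∀ z ∈ S, w z ≠ 0 := fun z hz h => by simpa [h] using hsq z hz
  have hbranch0 : ∀ z ∈ S, invSqrtBranch a b z ≠ 0 := fun z hz h => by simpa [h] using hsq z hz
  have hsq_eq : EqOn (w⁻¹ ^ 2) (invSqrtBranch a b ^ 2) S := fun z hz => by
    simpa only [Pi.pow_apply, Pi.inv_apply, inv_pow] using
      (eq_inv_of_mul_eq_one_left (hsq z hz)).symm
  rcases hS.eq_or_eq_neg_of_sq_eq (hw.inv₀ hw0) ((continuousOn_invSqrtBranch a b).mono hab) hsq_eq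
    (hbranch0 _) with heq | heq
  · exact ⟨1, norm_one, fun z hz => by simpa using heq hz⟩
  · exact ⟨-1, by simp, fun z hz => by simpa using heq hz⟩

end Segment

section SegmentEstimate

variable {E : Type*} [NormedAddCommGroup E] [NormedSpace ℂ E] [CompleteSpace E]
  {a b : ℂ} {U : Set ℂ} {f : ℂ → E} {γ : ℝ → ℂ}

theorem contourIntegral_invSqrtBranch_smul (hU : IsOpen U) (hf : DifferentiableOn ℂ f U)
    (hγ : IsC1Loop γ) (hγU : γ '' Icc 0 1 ⊆ U \ segment ℝ a b)
    (hwind1 : ∀ z ∈ segment ℝ a b, windingNumber γ z = 1)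
    (hwind0 : ∀ z ∉ U, windingNumber γ z = 0) :
    contourIntegral γ (fun ζ => invSqrtBranch a b ζ • f ζ) =
      (2 * π * Complex.I) • Real.circleAverage (fun x => f (segmentCircleMap a b x)) 0 1 := by
  have hγU' : γ '' Icc 0 1 ⊆ U := fun ζ hζ => (hγU hζ).1
  have hkernel : ContinuousOn (uncurry fun ζ x => (ζ - segmentCircleMap a b x)⁻¹ • f ζ)
      ((γ '' Icc 0 1) ×ˢ sphere 0 |1|) := by
    rw [abs_one]
    exact ((continuousOn_cauchyKernel_segmentCircleMap a b).mono
      (prod_mono_left fun ζ hζ => (hγU hζ).2)).smul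
      ((hf.continuousOn.mono hγU').comp continuousOn_fst fun q hq => hq.1)
  have hcauchy : EqOn
      (fun x => contourIntegral γ fun ζ => (ζ - segmentCircleMap a b x)⁻¹ • f ζ)
      (fun x => (2 * π * Complex.I) • f (segmentCircleMap a b x)) (sphere 0 |1|) := fun x hx => by
    have hmem := segmentCircleMap_mem_segment a b (x := x) (by simpa using hx)
    simp only [contourIntegral_cauchyKernel_smul hU hf hγ hγU' hwind0 fun h => (hγU h).2 hmem,
      hwind1 _ hmem, mul_one]
  calc contourIntegral γ (fun ζ => invSqrtBranch a b ζ • f ζ)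
      = contourIntegral γ fun ζ =>
          Real.circleAverage (fun x => (ζ - segmentCircleMap a b x)⁻¹ • f ζ) 0 1 := by
        simp only [circleAverage_smul_const, invSqrtBranch]
    _ = Real.circleAverage
          (fun x => contourIntegral γ fun ζ => (ζ - segmentCircleMap a b x)⁻¹ • f ζ) 0 1 :=
        contourIntegral_circleAverage hγ.contDiffOn hkernel
    _ = (2 * π * Complex.I) • Real.circleAverage (fun x => f (segmentCircleMap a b x)) 0 1 := by
        rw [Real.circleAverage_congr_sphere hcauchy, Real.circleAverage_fun_smul]

theorem stmt_9_general {w : ℂ → ℂ} (hU : IsOpen U) (hf : DifferentiableOn ℂ f U)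
    (hγ : IsC1Loop γ) (hγU : γ '' Icc 0 1 ⊆ U \ segment ℝ a b)
    (hw : ContinuousOn w (γ '' Icc 0 1))
    (hw2 : ∀ z ∈ γ '' Icc 0 1, w z ^ 2 = (z - a) * (z - b))
    (hwind1 : ∀ z ∈ segment ℝ a b, windingNumber γ z = 1)
    (hwind0 : ∀ z ∉ U, windingNumber γ z = 0) :
    ‖contourIntegral γ fun ζ => (w ζ)⁻¹ • f ζ‖ ≤
      2 * π * sSup ((fun z => ‖f z‖) '' segment ℝ a b) := by
  have hab : segment ℝ a b ⊆ U := fun z hz => by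
    by_contra hzU
    exact zero_ne_one ((hwind0 z hzU).symm.trans (hwind1 z hz))
  obtain ⟨ε, hε, hwε⟩ := exists_norm_eq_one_inv_eq_mul_invSqrtBranch
    (isPreconnected_Icc.image γ hγ.contDiffOn.continuousOn)
    (disjoint_left.mpr fun ζ hζ => (hγU hζ).2) hw hw2
  have hsign : EqOn (fun ζ => (w ζ)⁻¹ • f ζ) (fun ζ => ε • invSqrtBranch a b ζ • f ζ)
      (γ '' Icc 0 1) := fun ζ hζ => by simp only [hwε ζ hζ, mul_smul]
  have hnorm : ‖2 * (π : ℂ) * Complex.I‖ = 2 * π := by simp [Real.pi_pos.le]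
  rw [contourIntegral_congr hsign, contourIntegral_const_smul,
    contourIntegral_invSqrtBranch_smul hU hf hγ hγU hwind1 hwind0, norm_smul, norm_smul, hε,
    one_mul, hnorm]
  gcongr
  exact norm_circleAverage_segmentCircleMap_le (hf.continuousOn.mono hab)

end SegmentEstimate

/-- Let `[a,b]` be the closed segment joining `a, b ∈ ℂ`, let `U ⊇ [a,b]` be open,
`f` holomorphic on `U`, and `w` holomorphic on `ℂ ∖ [a,b]` with `w(λ)² = (λ-a)(λ-b)`
off the segment. If `γ : [0,1] → ℂ` is a `C¹` closed curve in `U ∖ [a,b]` with winding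
number `1` around every point of `[a,b]` and `0` around every point outside `U`, then
`|∮_γ f/w dλ| ≤ 2π max_{λ ∈ [a,b]} |f(λ)|`. -/
theorem stmt_9 (a b : ℂ) (U : Set ℂ) (hU : IsOpen U)
    (hab : segment ℝ a b ⊆ U) (f w : ℂ → ℂ)
    (hf : DifferentiableOn ℂ f U)
    (hw : DifferentiableOn ℂ w (segment ℝ a b)ᶜ)
    (hw2 : ∀ z ∉ segment ℝ a b, (w z) ^ 2 = (z - a) * (z - b))
    (γ : ℝ → ℂ) (hγ : ContDiffOn ℝ 1 γ (Icc 0 1))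
    (hclosed : γ 0 = γ 1)
    (him : γ '' Icc 0 1 ⊆ U \ segment ℝ a b)
    (hwind1 : ∀ z ∈ segment ℝ a b,
      (1 / (2 * Real.pi * Complex.I)) *
        ∫ t in (0:ℝ)..1, derivWithin γ (Icc 0 1) t / (γ t - z) = 1)
    (hwind0 : ∀ z ∉ U,
      (1 / (2 * Real.pi * Complex.I)) *
        ∫ t in (0:ℝ)..1, derivWithin γ (Icc 0 1) t / (γ t - z) = 0) :
    ‖∫ t in (0:ℝ)..1, (f (γ t) / w (γ t)) * derivWithin γ (Icc 0 1) t‖ ≤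
      2 * Real.pi * sSup ((fun z => ‖f z‖) '' segment ℝ a b) := by
  have htrace : γ '' Icc 0 1 ⊆ (segment ℝ a b)ᶜ := fun ζ hζ => (him hζ).2
  simp only [one_div] at hwind1 hwind0
  simpa only [contourIntegral, smul_eq_mul, div_eq_mul_inv, mul_comm] using
    stmt_9_general hU hf ⟨hγ, hclosed⟩ him (hw.continuousOn.mono htrace)
      (fun z hz => hw2 z (htrace hz)) hwind1 hwind0
end

section
/- Let a, b ∈ ℂ and let G ⊆ ℂ be the image of a continuous injective curve from a to b (i.e. G = g([0,1]) for some continuous injective g : [0,1] → ℂ with g(0) = a and g(1) = b). Then there exists a holomorphic function w on ℂ ∖ G (the standard root of (λ − a)(λ − b) on ℂ ∖ G) such that w(λ)² = (λ − a)(λ − b) for all λ ∈ ℂ ∖ G and such that w(λ)/λ → −1 as |λ| → ∞, i.e. w(λ) ∼ −λ at infinity. -/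
open Set Filter

/-!
In the coordinate `u = (z - a)⁻¹` one has `(z - b) / (z - a) = 1 - u * (b - a)`, and `z = ∞`
becomes `u = 0`. Over the complement of the curve, together with `u = 0`, moving the end point
along the curve gives the homotopy `1 - u * (γ t - a)` of nonvanishing functions, from the constant
`1` to `1 - u * (b - a)`. Since squaring is a covering map away from zero, the latter function has a
holomorphic square root `r`, which can be normalised by `r 0 = 1`. The function sought is then
`w z = -(z - a) * r ((z - a)⁻¹)`, and its behaviour at infinity is the continuity of `r` at `0`.
-/

open Bornology Topology unitInterval

section Roots

theorem exists_lift_of_homotopic {A B E : Type*} [TopologicalSpace A]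
    [TopologicalSpace B] [TopologicalSpace E] {p : E → B} (hp : IsCoveringMap p)
    {f₀ f₁ : C(A, B)} (h : f₀.Homotopic f₁) (F₀ : C(A, E)) (hF₀ : ∀ x, p (F₀ x) = f₀ x) :
    ∃ F₁ : C(A, E), ∀ x, p (F₁ x) = f₁ x := by
  obtain ⟨H⟩ := h
  have H_zero (x : A) : H (0, x) = p (F₀ x) := by rw [H.apply_zero, hF₀]
  refine ⟨(hp.liftHomotopy H.toContinuousMap F₀ H_zero).comp (.prodMk (.const A 1) (.id A)),
    fun x ↦ ?_⟩
  exact (congrFun (hp.liftHomotopy_lifts H.toContinuousMap F₀ H_zero) (1, x)).trans (H.apply_one x)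

variable {𝕜 : Type*} [NontriviallyNormedField 𝕜] {n : ℕ}

theorem exists_continuousOn_pow_eq_of_homotopy [ProperSpace 𝕜] (hn : (n : 𝕜) ≠ 0) {X : Type*}
    [TopologicalSpace X] {s : Set X} {h : I × X → 𝕜} (hc : ContinuousOn h (univ ×ˢ s))
    (hne : ∀ t, ∀ x ∈ s, h (t, x) ≠ 0) (h_zero : ∀ x ∈ s, h (0, x) = 1) :
    ∃ r : X → 𝕜, ContinuousOn r s ∧ ∀ x ∈ s, r x ^ n = h (1, x) := by
  classical
  let H : C(I × s, {y : 𝕜 // y ≠ 0}) :=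
    ⟨fun q ↦ ⟨h (q.1, q.2), hne _ _ q.2.2⟩, Continuous.subtype_mk
      (hc.comp_continuous (by fun_prop) fun q ↦ ⟨mem_univ _, q.2.2⟩) _⟩
  have hH : (ContinuousMap.const s ⟨1, one_ne_zero⟩).Homotopic
      (H.comp (.prodMk (.const s 1) (.id s))) :=
    ⟨⟨H, fun x ↦ Subtype.ext (h_zero x x.2), fun _ ↦ rfl⟩⟩
  obtain ⟨R, hR⟩ := exists_lift_of_homotopic (isCoveringMap_npow n hn) hH
    (.const s ⟨1, one_ne_zero⟩) fun _ ↦ Subtype.ext (one_pow n)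
  refine ⟨fun x ↦ if hx : x ∈ s then R ⟨x, hx⟩ else 0, ?_, fun x hx ↦ ?_⟩
  · rw [continuousOn_iff_continuous_domRestrict]
    convert continuous_subtype_val.comp R.continuous using 1
    ext x
    simp
  · simp only [dif_pos hx]
    exact congrArg Subtype.val (hR ⟨x, hx⟩)

theorem differentiableAt_of_pow {E : Type*} [NormedAddCommGroup E] [NormedSpace 𝕜 E] {r : E → 𝕜}
    {x : E} (hn : (n : 𝕜) ≠ 0) (hr : ContinuousAt r x) (hx : r x ≠ 0)
    (h : DifferentiableAt 𝕜 (fun y ↦ r y ^ n) x) : DifferentiableAt 𝕜 r x := by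
  have hpow : (n : 𝕜) * r x ^ (n - 1) ≠ 0 := mul_ne_zero hn (pow_ne_zero _ hx)
  let e := ContinuousLinearEquiv.unitsEquivAut 𝕜 (Units.mk0 _ hpow)
  have hpow_deriv : HasFDerivAt (fun y ↦ y ^ n) (e : 𝕜 →L[𝕜] 𝕜) (r x) :=
    (hasDerivAt_pow n (r x)).hasFDerivAt_equiv hpow
  exact (hpow_deriv.of_comp_of_leftInverse (f'symm := (e.symm : 𝕜 →L[𝕜] 𝕜)) hr h.hasFDerivAt
    .rfl e.symm_apply_apply).differentiableAt

end Roots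

section InvertedCompl

/-- The complement of `K` in the projective line `𝕜 ∪ {∞}`, seen in the coordinate
`u = (z - a)⁻¹` centred at `∞`; here `a` should belong to `K`. The condition `z ∉ K` is written
without inverses, so that `u = 0`, which stands for `z = ∞`, is included. -/
def invertedCompl {𝕜 : Type*} [Ring 𝕜] (a : 𝕜) (K : Set 𝕜) : Set 𝕜 :=
  {u | ∀ x ∈ K, u * (x - a) ≠ 1}

theorem zero_mem_invertedCompl {𝕜 : Type*} [Ring 𝕜] [Nontrivial 𝕜] (a : 𝕜) (K : Set 𝕜) :
    0 ∈ invertedCompl a K := by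
  simp [invertedCompl]

theorem inv_sub_mem_invertedCompl {𝕜 : Type*} [DivisionRing 𝕜] {a z : 𝕜} {K : Set 𝕜}
    (hz : z ∉ K) : (z - a)⁻¹ ∈ invertedCompl a K := fun x hx h ↦ by
  have hza : z - a ≠ 0 := fun h0 ↦ by simp [h0] at h
  rw [inv_mul_eq_one₀ hza, sub_left_inj] at h
  exact hz (h ▸ hx)

theorem isOpen_invertedCompl {𝕜 : Type*} [Ring 𝕜] [TopologicalSpace 𝕜]
    [IsTopologicalRing 𝕜] [T1Space 𝕜] {a : 𝕜} {K : Set 𝕜} (hK : IsCompact K) :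
    IsOpen (invertedCompl a K) :=
  isOpen_iff_mem_nhds.2 fun u hu ↦ hK.eventually_forall_of_forall_eventually fun x hx ↦
    ContinuousAt.eventually_ne (by fun_prop) (hu x hx)

end InvertedCompl

section SquareRoot

variable {𝕜 : Type*} [NontriviallyNormedField 𝕜] {a b : 𝕜}

theorem exists_differentiableOn_invertedCompl_pow_eq [ProperSpace 𝕜] {n : ℕ} (hn : (n : 𝕜) ≠ 0)
    (γ : Path a b) :
    ∃ r : 𝕜 → 𝕜, DifferentiableOn 𝕜 r (invertedCompl a (range γ)) ∧ r 0 = 1 ∧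
      ∀ u ∈ invertedCompl a (range γ), r u ^ n = 1 - u * (b - a) := by
  set Ω := invertedCompl a (range γ)
  have hne (t : I) (u : 𝕜) (hu : u ∈ Ω) : 1 - u * (γ t - a) ≠ 0 :=
    sub_ne_zero.2 (hu _ (mem_range_self t)).symm
  obtain ⟨r, hrc, hr⟩ := exists_continuousOn_pow_eq_of_homotopy hn
    (h := fun q ↦ 1 - q.2 * (γ q.1 - a)) (by fun_prop) hne (by simp)
  simp only [γ.target] at hr
  have hΩ : IsOpen Ω := isOpen_invertedCompl (isCompact_range γ.continuous)
  have hn0 : n ≠ 0 := by rintro rfl; simp at hn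
  have hr_zero : r 0 ^ n = 1 := by simpa using hr 0 (zero_mem_invertedCompl a _)
  have hrd : DifferentiableOn 𝕜 r Ω := fun u hu ↦ by
    refine (differentiableAt_of_pow hn (hrc.continuousAt (hΩ.mem_nhds hu)) ?_ ?_
      ).differentiableWithinAt
    · refine ne_zero_pow hn0 ?_
      simpa only [hr u hu, γ.target] using hne 1 u hu
    · have hlin : DifferentiableAt 𝕜 (fun v ↦ 1 - v * (b - a)) u := by fun_prop
      exact hlin.congr_of_eventuallyEq (eventually_of_mem (hΩ.mem_nhds hu) hr)
  refine ⟨fun u ↦ r u / r 0, hrd.div_const _, ?_, fun u hu ↦ ?_⟩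
  · exact div_self (ne_zero_pow hn0 (hr_zero ▸ one_ne_zero))
  · rw [div_pow, hr_zero, div_one, hr u hu]

theorem tendsto_sub_mul_comp_inv_sub_div_cobounded {r : 𝕜 → 𝕜} (hr : ContinuousAt r 0) (a : 𝕜) :
    Tendsto (fun z ↦ (z - a) * r (z - a)⁻¹ / z) (cobounded 𝕜) (𝓝 (r 0)) := by
  have hinv : Tendsto (fun z : 𝕜 ↦ (z - a)⁻¹) (cobounded 𝕜) (𝓝 0) :=
    tendsto_inv₀_cobounded.comp (tendsto_sub_const_cobounded a)
  have hratio : Tendsto (fun z : 𝕜 ↦ 1 - a * z⁻¹) (cobounded 𝕜) (𝓝 1) := by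
    simpa using (tendsto_inv₀_cobounded.const_mul a).const_sub 1
  have hlim := hratio.mul (hr.tendsto.comp hinv)
  rw [one_mul] at hlim
  refine hlim.congr' ?_
  filter_upwards [eventually_ne_cobounded 0] with z hz
  simp only [Function.comp_apply]
  field_simp

theorem stmt_10_general [ProperSpace 𝕜] (h2 : (2 : 𝕜) ≠ 0) (γ : Path a b) :
    ∃ w : 𝕜 → 𝕜,
      DifferentiableOn 𝕜 w (range γ)ᶜ ∧
      (∀ z ∉ range γ, w z ^ 2 = (z - a) * (z - b)) ∧
      Tendsto (fun z ↦ w z / z) (cobounded 𝕜) (𝓝 (-1)) := by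
  obtain ⟨r, hrd, hr_zero, hr⟩ :=
    exists_differentiableOn_invertedCompl_pow_eq (n := 2) (mod_cast h2) γ
  have hsub (z : 𝕜) (hz : z ∉ range γ) : z - a ≠ 0 :=
    sub_ne_zero.2 fun h ↦ hz ⟨0, γ.source.trans h.symm⟩
  refine ⟨fun z ↦ -((z - a) * r (z - a)⁻¹), ?_, fun z hz ↦ ?_, ?_⟩
  · have hinv : DifferentiableOn 𝕜 (fun z ↦ (z - a)⁻¹) (range γ)ᶜ :=
      DifferentiableOn.inv (by fun_prop) hsub
    have hcomp := hrd.comp hinv fun z hz ↦ inv_sub_mem_invertedCompl hz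
    exact (DifferentiableOn.mul (by fun_prop) hcomp).neg
  · rw [neg_sq, mul_pow, hr _ (inv_sub_mem_invertedCompl hz)]
    have hza := hsub z hz
    field_simp
    ring
  · have hcont : ContinuousAt r 0 := hrd.continuousOn.continuousAt <|
      (isOpen_invertedCompl (isCompact_range γ.continuous)).mem_nhds
        (zero_mem_invertedCompl a _)
    simpa only [neg_div, hr_zero] using (tendsto_sub_mul_comp_inv_sub_div_cobounded hcont a).neg

end SquareRoot

/-- Let `G ⊆ ℂ` be the image of a continuous injective curve from `a` to `b`. Then there
exists a holomorphic function `w` on `ℂ ∖ G` (the standard root of `(λ-a)(λ-b)`) with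
`w(λ)² = (λ-a)(λ-b)` for all `λ ∉ G` and `w(λ)/λ → -1` as `|λ| → ∞`. -/
theorem stmt_10 (a b : ℂ) (g : ℝ → ℂ) (hg : ContinuousOn g (Icc 0 1))
    (hinj : InjOn g (Icc 0 1)) (ha : g 0 = a) (hb : g 1 = b) :
    ∃ w : ℂ → ℂ,
      DifferentiableOn ℂ w (g '' Icc 0 1)ᶜ ∧
      (∀ z ∉ g '' Icc 0 1, (w z) ^ 2 = (z - a) * (z - b)) ∧
      Tendsto (fun z => w z / z) (comap (fun z : ℂ => ‖z‖) atTop) (nhds (-1)) := by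
  let γ : Path a b := ⟨⟨fun t : I ↦ g t, hg.domRestrict⟩, ha, hb⟩
  have hγ : g '' Icc 0 1 = range γ := image_eq_range g _
  simpa only [hγ, comap_norm_atTop] using stmt_10_general two_ne_zero γ
end
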